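/- Let γ ∈ ℂ with Re γ > 1/2 and Im γ > 0. On ℂ⁴ with coordinates (z₁,z₂,w₁,w₂), define τ₁₁ : (z₁,z₂,w₁,w₂) ↦ (z₁, z₂, −w₁ − γ^{−1}z₂, w₂), τ₁₂ : (z₁,z₂,w₁,w₂) ↦ (z₁, z₂, w₁, −w₂ − (1 − conj γ)^{−1}z₁), the conjugate-linear involution ρ : (z₁,z₂,w₁,w₂) ↦ (conj w₁, conj w₂, conj z₁, conj z₂), and τ₂ⱼ := ρ∘τ₁ⱼ∘ρ for j = 1,2. Let σ := (τ₁₁∘τ₁₂)∘(τ₂₁∘τ₂₂). Then σ is a ℂ-linear automorphism of ℂ⁴ whose set of eigenvalues is exactly {μ, μ^{−1}, conj μ, (conj μ)^{−1}}, where μ := (γ^{−1} − 1)^{−1}, and these four numbers are pairwise distinct. -/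

import Mathlib

/-!
The map `σ` preserves the two planes with coordinates `(z₂, w₁)` and `(z₁, w₂)`, and on each of
them it is a product of two reflections. A product of two reflections of a plane has determinant
`1` and trace `t - 2`, where `t` is the product of the two pairings between the roots and the
opposite coroots; its eigenvalues are therefore `μ` and `μ⁻¹` as soon as `t = μ + 2 + μ⁻¹`. The two
planes have `t = 1 / (γ (1 - γ))` and its conjugate. Finally, `μ`, `μ⁻¹`, `conj μ`, `(conj μ)⁻¹` are
distinct because `μ` lies neither on the real line (`Im γ ≠ 0`) nor on the unit circle
(`Re γ ≠ 1 / 2`).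
-/

open Module Polynomial ComplexConjugate

section Reflections

variable {R M : Type*} [CommRing R] [AddCommGroup M] [Module R M] [Free R M] [Module.Finite R M]

lemma charpoly_of_finrank_eq_two (φ : End R M) (hM : finrank R M = 2) :
    φ.charpoly = X ^ 2 - C (LinearMap.trace R M φ) * X + C φ.det := by
  nontriviality R
  let e := finBasisOfFinrankEq R M hM
  rw [← LinearMap.charpoly_toMatrix φ e, Matrix.charpoly_fin_two, LinearMap.det_toMatrix,
    ← LinearMap.trace_eq_matrix_trace]

variable {x y : M} {f g : Dual R M}

lemma det_reflection (hf : f x = 2) : (reflection hf).toLinearMap.det = -1 := by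
  have h_transvection : (reflection hf).toLinearMap = LinearMap.transvection (-f) x := by
    ext z
    simp [reflection_apply, LinearMap.transvection.apply, sub_eq_add_neg]
  rw [h_transvection, LinearMap.transvection.det, LinearMap.neg_apply, hf]
  ring

lemma trace_reflection_mul_reflection (hf : f x = 2) (hg : g y = 2) :
    LinearMap.trace R M (reflection hf * reflection hg).toLinearMap =
      finrank R M - 4 + f y * g x := by
  have h_expand : (reflection hf * reflection hg).toLinearMap =
      LinearMap.id - f.smulRight x - g.smulRight y + f y • g.smulRight x := by
    ext z
    simp only [LinearEquiv.coe_coe, LinearEquiv.mul_apply, reflection_apply, map_sub, map_smul,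
      LinearMap.add_apply, LinearMap.sub_apply, LinearMap.id_apply, LinearMap.smul_apply,
      LinearMap.smulRight_apply]
    module
  simp only [h_expand, map_add, map_sub, map_smul, LinearMap.trace_id, LinearMap.trace_smulRight,
    hf, hg, smul_eq_mul]
  ring

lemma charpoly_reflection_mul_reflection (hM : finrank R M = 2) (hf : f x = 2) (hg : g y = 2) :
    (reflection hf * reflection hg).toLinearMap.charpoly =
      X ^ 2 - C (f y * g x - 2) * X + 1 := by
  have h_det : (reflection hf * reflection hg).toLinearMap.det = 1 := by
    rw [LinearEquiv.coe_toLinearMap_mul, map_mul, det_reflection, det_reflection, neg_mul_neg,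
      one_mul]
  have h_trace : (finrank R M : R) - 4 + f y * g x = f y * g x - 2 := by
    rw [hM]
    push_cast
    ring
  rw [charpoly_of_finrank_eq_two _ hM, h_det, trace_reflection_mul_reflection, h_trace, C_1]

end Reflections

section CoordinatePlanes

variable {R : Type*} [CommRing R]

/-- The Coxeter element of the rank two Cartan matrix `!![2, b; a, 2]`, whose off-diagonal entries
may be any elements of `R`: the reflection `(x, y) ↦ (-x - b * y, y)` followed by the reflection
`(x, y) ↦ (x, -y - a * x)`. -/
noncomputable def coxeterElement (a b : R) : (R × R) ≃ₗ[R] R × R :=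
  reflection (x := ((0, 1) : R × R)) (f := a • LinearMap.fst R R R + 2 • LinearMap.snd R R R)
      (by simp) *
    reflection (x := ((1, 0) : R × R)) (f := 2 • LinearMap.fst R R R + b • LinearMap.snd R R R)
      (by simp)

lemma coxeterElement_apply (a b x y : R) :
    coxeterElement a b (x, y) = (-x - b * y, -y - a * (-x - b * y)) := by
  simp only [coxeterElement, LinearEquiv.mul_apply, reflection_apply]
  ext <;> simp <;> ring

lemma charpoly_coxeterElement (a b : R) :
    (coxeterElement a b).toLinearMap.charpoly = X ^ 2 - C (a * b - 2) * X + 1 := by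
  nontriviality R
  rw [coxeterElement, charpoly_reflection_mul_reflection (by simp)]
  simp

variable (R) in
/-- The splitting of `R⁴`, with coordinates `(z₁, z₂, w₁, w₂)`, into the coordinate planes
`(z₂, w₁)` and `(z₁, w₂)`, which are the invariant planes of `σ`. -/
def coordinatePlanes : (R × R × R × R) ≃ₗ[R] (R × R) × (R × R) where
  toFun v := ((v.2.1, v.2.2.1), (v.1, v.2.2.2))
  invFun p := (p.2.1, p.1.1, p.1.2, p.2.2)
  map_add' _ _ := rfl
  map_smul' _ _ := rfl

/-- The automorphism of `R⁴` acting as `coxeterElement a b` on the plane `(z₂, w₁)` and as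
`coxeterElement c d` on the plane `(z₁, w₂)`. The map `σ` is of this form, the reflections of
the planes being the deck transformations. -/
noncomputable def planewiseCoxeter (a b c d : R) : (R × R × R × R) ≃ₗ[R] R × R × R × R :=
  coordinatePlanes R ≪≫ₗ (coxeterElement a b).prodCongr (coxeterElement c d) ≪≫ₗ
    (coordinatePlanes R).symm

lemma planewiseCoxeter_apply (a b c d z₁ z₂ w₁ w₂ : R) :
    planewiseCoxeter a b c d (z₁, z₂, w₁, w₂) =
      (-z₁ - d * w₂, -z₂ - b * w₁, -w₁ - a * (-z₂ - b * w₁), -w₂ - c * (-z₁ - d * w₂)) := by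
  simp [planewiseCoxeter, coordinatePlanes, coxeterElement_apply]

lemma charpoly_planewiseCoxeter (a b c d : R) :
    (planewiseCoxeter a b c d).toLinearMap.charpoly =
      (X ^ 2 - C (a * b - 2) * X + 1) * (X ^ 2 - C (c * d - 2) * X + 1) := by
  have h_conj : (planewiseCoxeter a b c d).toLinearMap = (coordinatePlanes R).symm.conj
      ((coxeterElement a b).toLinearMap.prodMap (coxeterElement c d).toLinearMap) := rfl
  rw [h_conj, LinearEquiv.charpoly_conj, LinearMap.charpoly_prodMap, charpoly_coxeterElement,
    charpoly_coxeterElement]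

end CoordinatePlanes

section Eigenvalues

variable {K : Type*} [Field K]

lemma hasEigenvalue_iff_exists_apply_eq_smul {R V : Type*} [CommRing R] [AddCommGroup V]
    [Module R V] {φ : End R V} {κ : R} : φ.HasEigenvalue κ ↔ ∃ v, v ≠ 0 ∧ φ v = κ • v := by
  constructor
  · intro h
    obtain ⟨v, hv⟩ := h.exists_hasEigenvector
    exact ⟨v, hv.2, hv.apply_eq_smul⟩
  · rintro ⟨v, hv, h⟩
    exact End.hasEigenvalue_of_hasEigenvector ⟨End.mem_eigenspace_iff.mpr h, hv⟩

lemma X_sq_sub_C_add_inv_mul_X_add_one {μ : K} (hμ : μ ≠ 0) :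
    X ^ 2 - C (μ + μ⁻¹) * X + 1 = (X - C μ) * (X - C μ⁻¹) := by
  have h_C : C μ * C μ⁻¹ = 1 := by rw [← C_mul, mul_inv_cancel₀ hμ, C_1]
  rw [C_add]
  linear_combination -h_C

lemma hasEigenvalue_planewiseCoxeter_iff {a b c d μ ν κ : K} (hμ : μ ≠ 0) (hν : ν ≠ 0)
    (hab : a * b = μ + 2 + μ⁻¹) (hcd : c * d = ν + 2 + ν⁻¹) :
    End.HasEigenvalue (planewiseCoxeter a b c d).toLinearMap κ ↔
      κ = μ ∨ κ = μ⁻¹ ∨ κ = ν ∨ κ = ν⁻¹ := by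
  have hab' : a * b - 2 = μ + μ⁻¹ := by rw [hab]; ring
  have hcd' : c * d - 2 = ν + ν⁻¹ := by rw [hcd]; ring
  rw [End.hasEigenvalue_iff_isRoot_charpoly, charpoly_planewiseCoxeter, hab', hcd',
    X_sq_sub_C_add_inv_mul_X_add_one hμ, X_sq_sub_C_add_inv_mul_X_add_one hν]
  simp only [root_mul, root_X_sub_C, or_assoc, eq_comm]

lemma inv_mul_inv_one_sub_eq {γ : K} (h₀ : γ ≠ 0) (h₁ : γ ≠ 1) :
    γ⁻¹ * (1 - γ)⁻¹ = (γ⁻¹ - 1)⁻¹ + 2 + (γ⁻¹ - 1)⁻¹⁻¹ := by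
  have h₂ : 1 - γ ≠ 0 := sub_ne_zero.mpr h₁.symm
  have h_div : γ⁻¹ - 1 = (1 - γ) / γ := by field_simp
  rw [h_div]
  field_simp
  ring

end Eigenvalues

lemma norm_inv_sub_one_eq_one_iff {γ : ℂ} (hγ : γ ≠ 0) : ‖γ⁻¹ - 1‖ = 1 ↔ γ.re = 1 / 2 := by
  have h_div : γ⁻¹ - 1 = (1 - γ) / γ := by field_simp
  rw [h_div, norm_div, div_eq_one_iff_eq (norm_ne_zero_iff.mpr hγ),
    ← sq_eq_sq₀ (norm_nonneg _) (norm_nonneg _), Complex.sq_norm, Complex.sq_norm,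
    Complex.normSq_apply, Complex.normSq_apply]
  simp only [Complex.sub_re, Complex.one_re, Complex.sub_im, Complex.one_im]
  constructor <;> intro h <;> linarith

lemma nodup_inv_conj_of_im_ne_zero_of_norm_ne_one {μ : ℂ} (him : μ.im ≠ 0) (hnorm : ‖μ‖ ≠ 1) :
    [μ, μ⁻¹, conj μ, (conj μ)⁻¹].Nodup := by
  have h_inv : μ ≠ μ⁻¹ := fun h ↦ him <| by
    rcases self_eq_inv₀.mp h with rfl | rfl | rfl <;> simp
  have h_conj : μ ≠ conj μ := fun h ↦ him (Complex.conj_eq_iff_im.mp h.symm)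
  have h_conj_inv : μ ≠ (conj μ)⁻¹ := fun h ↦ by
    have h_norm : ‖μ‖ = ‖μ‖⁻¹ := by simpa using congrArg norm h
    rcases self_eq_inv₀.mp h_norm with h₁ | h₁ | h₁
    · linarith [norm_nonneg μ]
    · exact him (by simp [norm_eq_zero.mp h₁])
    · exact hnorm h₁
  have h_inv_conj : μ⁻¹ ≠ conj μ := fun h ↦ h_conj_inv (inv_eq_iff_eq_inv.mp h)
  have h_conj_inv_conj : conj μ ≠ (conj μ)⁻¹ := by
    rwa [← map_inv₀, (starRingEnd ℂ).injective.ne_iff]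
  simp [h_inv, h_conj, h_conj_inv, h_inv_conj, h_conj_inv_conj]

lemma nodup_inv_conj_inv_sub_one_inv {γ : ℂ} (hre : γ.re ≠ 1 / 2) (him : γ.im ≠ 0) :
    [(γ⁻¹ - 1)⁻¹, (γ⁻¹ - 1)⁻¹⁻¹, conj (γ⁻¹ - 1)⁻¹, (conj (γ⁻¹ - 1)⁻¹)⁻¹].Nodup := by
  have hγ : γ ≠ 0 := by rintro rfl; exact him Complex.zero_im
  apply nodup_inv_conj_of_im_ne_zero_of_norm_ne_one
  · rw [Ne, ← Complex.conj_eq_iff_im] at him ⊢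
    simpa using him
  · rwa [norm_inv, Ne, inv_eq_one, norm_inv_sub_one_eq_one_iff hγ]

theorem stmt_9_general (γ : ℂ) (hre : γ.re ≠ 1 / 2) (him : γ.im ≠ 0)
    (μ : ℂ) (hμ : μ = (γ⁻¹ - 1)⁻¹)
    (τ11 τ12 τ21 τ22 σ ρ : ℂ × ℂ × ℂ × ℂ → ℂ × ℂ × ℂ × ℂ)
    (hτ11 : ∀ z₁ z₂ w₁ w₂ : ℂ, τ11 (z₁, z₂, w₁, w₂) = (z₁, z₂, -w₁ - γ⁻¹ * z₂, w₂))
    (hτ12 : ∀ z₁ z₂ w₁ w₂ : ℂ,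
      τ12 (z₁, z₂, w₁, w₂) = (z₁, z₂, w₁, -w₂ - (1 - (starRingEnd ℂ) γ)⁻¹ * z₁))
    (hρ : ∀ z₁ z₂ w₁ w₂ : ℂ,
      ρ (z₁, z₂, w₁, w₂) =
        ((starRingEnd ℂ) w₁, (starRingEnd ℂ) w₂, (starRingEnd ℂ) z₁, (starRingEnd ℂ) z₂))
    (hτ21 : τ21 = ρ ∘ τ11 ∘ ρ) (hτ22 : τ22 = ρ ∘ τ12 ∘ ρ)
    (hσ : σ = (τ11 ∘ τ12) ∘ (τ21 ∘ τ22)) :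
    (∀ v w : ℂ × ℂ × ℂ × ℂ, σ (v + w) = σ v + σ w) ∧
    (∀ (c : ℂ) (v : ℂ × ℂ × ℂ × ℂ), σ (c • v) = c • σ v) ∧
    Function.Bijective σ ∧
    (∀ κ : ℂ, (∃ v : ℂ × ℂ × ℂ × ℂ, v ≠ 0 ∧ σ v = κ • v) ↔
      κ = μ ∨ κ = μ⁻¹ ∨ κ = (starRingEnd ℂ) μ ∨ κ = ((starRingEnd ℂ) μ)⁻¹) ∧
    (μ ≠ μ⁻¹ ∧ μ ≠ (starRingEnd ℂ) μ ∧ μ ≠ ((starRingEnd ℂ) μ)⁻¹ ∧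
      μ⁻¹ ≠ (starRingEnd ℂ) μ ∧ μ⁻¹ ≠ ((starRingEnd ℂ) μ)⁻¹ ∧
      (starRingEnd ℂ) μ ≠ ((starRingEnd ℂ) μ)⁻¹) := by
  have hγ₀ : γ ≠ 0 := by rintro rfl; exact him Complex.zero_im
  have hγ₁ : γ ≠ 1 := by rintro rfl; exact him Complex.one_im
  have h_nodup : [μ, μ⁻¹, conj μ, (conj μ)⁻¹].Nodup :=
    hμ ▸ nodup_inv_conj_inv_sub_one_inv hre him
  have hμ₀ : μ ≠ 0 := by rintro rfl; simp at h_nodup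
  have h_pairing : γ⁻¹ * (1 - γ)⁻¹ = μ + 2 + μ⁻¹ := by
    rw [hμ, inv_mul_inv_one_sub_eq hγ₀ hγ₁]
  have h_pairing_conj : (1 - conj γ)⁻¹ * (conj γ)⁻¹ = conj μ + 2 + (conj μ)⁻¹ := by
    simpa [mul_comm, map_ofNat] using congrArg conj h_pairing
  have hσ_eq : σ = planewiseCoxeter γ⁻¹ (1 - γ)⁻¹ (1 - conj γ)⁻¹ (conj γ)⁻¹ := by
    ext1 ⟨z₁, z₂, w₁, w₂⟩
    simp [hσ, hτ21, hτ22, hρ, hτ11, hτ12, planewiseCoxeter_apply]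
  subst hσ_eq
  refine ⟨map_add _, map_smul _, LinearEquiv.bijective _, fun κ ↦ ?_, ?_⟩
  · exact hasEigenvalue_iff_exists_apply_eq_smul.symm.trans
      (hasEigenvalue_planewiseCoxeter_iff hμ₀ (by simpa using hμ₀) h_pairing h_pairing_conj)
  · simpa [and_assoc] using h_nodup

/-- For `Re γ > 1/2`, `Im γ > 0`, the composition `σ = (τ₁₁∘τ₁₂)∘(τ₂₁∘τ₂₂)` of the deck
transformations of the complex-type quadric is a ℂ-linear automorphism of `ℂ⁴` whose
eigenvalue set is exactly `{μ, μ⁻¹, conj μ, (conj μ)⁻¹}` with `μ = (γ⁻¹ − 1)⁻¹`, and these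
four numbers are pairwise distinct. -/
theorem stmt_9 (γ : ℂ) (hre : 1 / 2 < γ.re) (him : 0 < γ.im)
    (μ : ℂ) (hμ : μ = (γ⁻¹ - 1)⁻¹)
    (τ11 τ12 τ21 τ22 σ ρ : ℂ × ℂ × ℂ × ℂ → ℂ × ℂ × ℂ × ℂ)
    (hτ11 : ∀ z₁ z₂ w₁ w₂ : ℂ, τ11 (z₁, z₂, w₁, w₂) = (z₁, z₂, -w₁ - γ⁻¹ * z₂, w₂))
    (hτ12 : ∀ z₁ z₂ w₁ w₂ : ℂ,
      τ12 (z₁, z₂, w₁, w₂) = (z₁, z₂, w₁, -w₂ - (1 - (starRingEnd ℂ) γ)⁻¹ * z₁))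
    (hρ : ∀ z₁ z₂ w₁ w₂ : ℂ,
      ρ (z₁, z₂, w₁, w₂) =
        ((starRingEnd ℂ) w₁, (starRingEnd ℂ) w₂, (starRingEnd ℂ) z₁, (starRingEnd ℂ) z₂))
    (hτ21 : τ21 = ρ ∘ τ11 ∘ ρ) (hτ22 : τ22 = ρ ∘ τ12 ∘ ρ)
    (hσ : σ = (τ11 ∘ τ12) ∘ (τ21 ∘ τ22)) :
    (∀ v w : ℂ × ℂ × ℂ × ℂ, σ (v + w) = σ v + σ w) ∧
    (∀ (c : ℂ) (v : ℂ × ℂ × ℂ × ℂ), σ (c • v) = c • σ v) ∧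
    Function.Bijective σ ∧
    (∀ κ : ℂ, (∃ v : ℂ × ℂ × ℂ × ℂ, v ≠ 0 ∧ σ v = κ • v) ↔
      κ = μ ∨ κ = μ⁻¹ ∨ κ = (starRingEnd ℂ) μ ∨ κ = ((starRingEnd ℂ) μ)⁻¹) ∧
    (μ ≠ μ⁻¹ ∧ μ ≠ (starRingEnd ℂ) μ ∧ μ ≠ ((starRingEnd ℂ) μ)⁻¹ ∧
      μ⁻¹ ≠ (starRingEnd ℂ) μ ∧ μ⁻¹ ≠ ((starRingEnd ℂ) μ)⁻¹ ∧
      (starRingEnd ℂ) μ ≠ ((starRingEnd ℂ) μ)⁻¹) := by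
  exact stmt_9_general γ hre.ne' him.ne' μ hμ τ11 τ12 τ21 τ22 σ ρ hτ11 hτ12 hρ hτ21 hτ22 hσ
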